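/- arXiv:1704.06722 — 2 statements merged into one kernel-verified Lean document; each statement's English description precedes it below -/
import Mathlib

section
/- Let X and Y be Banach spaces and T : X → Y a compact linear operator. Then there exist a compact linear operator S : X → c₀ and a bounded linear map R₀ defined on the closed linear span of S(X) in c₀ with ‖R₀‖ ≤ 1 and R₀(Sx) = Tx for all x ∈ X. In particular every compact operator factors through a closed subspace of c₀. -/
open Filter

/-!
The adjoint of `T` is compact (Schauder), so `{φ ∘ T | ‖φ‖ ≤ 1}` is totally bounded in the dual
of `X` and hence lies in the closed convex hull of a null sequence `(fₙ)` (Grothendieck). By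
Hahn–Banach, `‖T x‖ ≤ supₙ ‖fₙ x‖ = ‖S x‖` for `S x = (fₙ x)ₙ`. Since `fₙ → 0`, the operator `S`
is compact with values in `c₀`, and `S x ↦ T x` is a well-defined contraction on the range of `S`,
which extends to the closure.
-/

open Topology ZeroAtInfty

section CompactOperators

variable {𝕜 X Y F : Type*} [NormedAddCommGroup X] [NormedAddCommGroup Y] [NormedAddCommGroup F]

theorem isCompactOperator_of_forall_norm_le_add_sum [NontriviallyNormedField 𝕜]
    [NormedSpace 𝕜 X] [NormedSpace 𝕜 Y] [CompleteSpace Y] [NormedSpace 𝕜 F] [ProperSpace F]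
    (S : X →L[𝕜] Y)
    (hS : ∀ ε > 0, ∃ t : Finset (X →L[𝕜] F), ∀ x, ‖S x‖ ≤ ε * ‖x‖ + ∑ g ∈ t, ‖g x‖) :
    IsCompactOperator S := by
  suffices TotallyBounded (S '' Metric.closedBall 0 1) from
    (isCompactOperator_iff_isCompact_closure_image_closedBall S.toLinearMap one_pos).2
      (this.closure.isCompact_of_isClosed isClosed_closure)
  rw [Metric.totallyBounded_iff]
  intro ε hε
  obtain ⟨t, ht⟩ := hS (ε / 4) (by positivity)
  let Φ : X →L[𝕜] (t → F) := ContinuousLinearMap.pi fun g => g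
  have hΦ : TotallyBounded (Φ '' Metric.closedBall 0 1) :=
    have hbdd := Φ.lipschitz.isBounded_image (Metric.isBounded_closedBall (x := 0) (r := 1))
    hbdd.isCompact_closure.totallyBounded.subset subset_closure
  obtain ⟨δ, hδ, hδε⟩ : ∃ δ > 0, t.card * δ < ε / 2 :=
    exists_pos_mul_lt (by positivity) _
  obtain ⟨u, hu, hufin, hcov⟩ :=
    Set.exists_subset_image_finite_and.1 (Metric.finite_approx_of_totallyBounded hΦ δ hδ)
  refine ⟨S '' u, hufin.image S, ?_⟩
  rintro _ ⟨x, hx, rfl⟩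
  obtain ⟨y, hy, hxy⟩ : ∃ y ∈ u, dist (Φ x) (Φ y) < δ := by
    simpa using hcov ⟨x, hx, rfl⟩
  have hsub : ‖x - y‖ ≤ 2 := by
    linarith [norm_sub_le x y, mem_closedBall_zero_iff.1 hx, mem_closedBall_zero_iff.1 (hu hy)]
  have hsum : ∑ g ∈ t, ‖g (x - y)‖ ≤ t.card * δ := by
    rw [← nsmul_eq_mul]
    refine Finset.sum_le_card_nsmul _ _ _ fun g hg => ?_
    rw [map_sub, ← dist_eq_norm]
    exact (dist_le_pi_dist (Φ x) (Φ y) ⟨g, hg⟩).trans hxy.le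
  refine Set.mem_biUnion (Set.mem_image_of_mem S hy) ?_
  rw [Metric.mem_ball, dist_eq_norm, ← map_sub]
  calc ‖S (x - y)‖ ≤ ε / 4 * ‖x - y‖ + ∑ g ∈ t, ‖g (x - y)‖ := ht _
    _ ≤ ε / 4 * 2 + t.card * δ := by gcongr
    _ < ε := by linarith

theorem isCompactOperator_precomp [RCLike 𝕜] [NormedSpace 𝕜 X] [NormedSpace 𝕜 Y]
    [NormedSpace 𝕜 F] [ProperSpace F] {T : X →L[𝕜] Y} (hT : IsCompactOperator T) :
    IsCompactOperator (T.precomp F : (Y →L[𝕜] F) →L[𝕜] (X →L[𝕜] F)) := by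
  classical
  refine isCompactOperator_of_forall_norm_le_add_sum (F := F) _ fun ε hε => ?_
  obtain ⟨K, hK, hTK⟩ :=
    IsCompactOperator.image_closedBall_subset_compact (f := T.toLinearMap) hT 1
  obtain ⟨t, htfin, ht⟩ := Metric.totallyBounded_iff.1 (hK.totallyBounded.subset hTK) ε hε
  lift t to Finset Y using htfin
  let ev : Y → (Y →L[𝕜] F) →L[𝕜] F := ContinuousLinearMap.apply 𝕜 F
  refine ⟨t.image ev, fun φ => ?_⟩
  refine ContinuousLinearMap.opNorm_le_of_unit_norm (by positivity) fun x hx => ?_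
  obtain ⟨y, hy, hxy⟩ : ∃ y ∈ t, dist (T x) y < ε := by
    simpa using ht ⟨x, by simp [hx], rfl⟩
  have hφy : ‖φ y‖ ≤ ∑ g ∈ t.image ev, ‖g φ‖ :=
    Finset.single_le_sum (f := fun g => ‖g φ‖) (fun _ _ => norm_nonneg _)
      (Finset.mem_image_of_mem ev hy)
  calc ‖φ (T x)‖ = ‖φ (T x - y) + φ y‖ := by rw [← map_add, sub_add_cancel]
    _ ≤ ‖φ (T x - y)‖ + ‖φ y‖ := norm_add_le _ _
    _ ≤ ‖φ‖ * ε + ∑ g ∈ t.image ev, ‖g φ‖ := by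
      gcongr
      exact φ.le_opNorm_of_le (by rw [← dist_eq_norm]; exact hxy.le)
    _ = ε * ‖φ‖ + ∑ g ∈ t.image ev, ‖g φ‖ := by rw [mul_comm]

end CompactOperators

section ZeroAtInfty

variable {𝕜 α X F : Type*} [TopologicalSpace α] [NormedAddCommGroup X] [NormedAddCommGroup F]

theorem norm_zeroAtInfty_le_iff {f : C₀(α, F)} {C : ℝ} (hC : 0 ≤ C) :
    ‖f‖ ≤ C ↔ ∀ a, ‖f a‖ ≤ C := by
  rw [← ZeroAtInftyContinuousMap.norm_toBCF_eq_norm]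
  exact BoundedContinuousFunction.norm_le hC

theorem norm_apply_le_norm_zeroAtInfty (f : C₀(α, F)) (a : α) : ‖f a‖ ≤ ‖f‖ :=
  (norm_zeroAtInfty_le_iff (norm_nonneg f)).1 le_rfl a

variable [NontriviallyNormedField 𝕜] [NormedSpace 𝕜 X] [NormedSpace 𝕜 F]

/-- The operator `x ↦ (f a x)ₐ` into `C₀(α, F)` defined by a family `f` of operators `X → F`
vanishing at infinity in operator norm. For `α = ℕ` and `F = 𝕜` it is the operator into `c₀` whose
coordinates are a given null sequence of functionals. -/
noncomputable def pointwiseEval (f : C₀(α, X →L[𝕜] F)) : X →L[𝕜] C₀(α, F) :=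
  LinearMap.mkContinuous
    { toFun x :=
        { toFun a := f a x
          continuous_toFun := (map_continuous f).clm_apply continuous_const
          zero_at_infty' := by
            have hev := (ContinuousLinearMap.apply 𝕜 F x).continuous.tendsto 0
            rw [map_zero] at hev
            exact hev.comp (zero_at_infty f) }
      map_add' x y := by ext a; exact map_add (f a) x y
      map_smul' c x := by ext a; exact map_smul (f a) c x }
    ‖f‖ fun x => (norm_zeroAtInfty_le_iff (by positivity)).2 fun a =>
      (f a).le_of_opNorm_le (norm_apply_le_norm_zeroAtInfty f a) x

@[simp]
theorem pointwiseEval_apply (f : C₀(α, X →L[𝕜] F)) (x : X) (a : α) :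
    pointwiseEval f x a = f a x :=
  rfl

theorem isCompactOperator_pointwiseEval [ProperSpace F] (f : C₀(α, X →L[𝕜] F)) :
    IsCompactOperator (pointwiseEval f) := by
  refine isCompactOperator_of_forall_norm_le_add_sum (F := F) _ fun ε hε => ?_
  obtain ⟨K, hK, hfK⟩ := mem_cocompact.1 (zero_at_infty f (Metric.ball_mem_nhds 0 hε))
  obtain ⟨t, htfin, ht⟩ :=
    Metric.totallyBounded_iff.1 (hK.image (map_continuous f)).totallyBounded ε hε
  lift t to Finset (X →L[𝕜] F) using htfin
  refine ⟨t, fun x => (norm_zeroAtInfty_le_iff (by positivity)).2 fun a => ?_⟩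
  rw [pointwiseEval_apply]
  by_cases ha : a ∈ K
  · obtain ⟨g, hg, hag⟩ : ∃ g ∈ t, dist (f a) g < ε := by simpa using ht ⟨a, ha, rfl⟩
    rw [dist_eq_norm] at hag
    calc ‖f a x‖ = ‖(f a - g) x + g x‖ := by rw [_root_.sub_apply, sub_add_cancel]
      _ ≤ ‖(f a - g) x‖ + ‖g x‖ := norm_add_le _ _
      _ ≤ ε * ‖x‖ + ∑ g ∈ t, ‖g x‖ := by
        gcongr
        · exact (f a - g).le_of_opNorm_le hag.le x
        · exact Finset.single_le_sum (f := fun g => ‖g x‖) (fun _ _ => norm_nonneg _) hg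
  · have hfa : ‖f a‖ < ε := mem_ball_zero_iff.1 (hfK ha)
    exact ((f a).le_of_opNorm_le hfa.le x).trans (le_add_of_nonneg_right (by positivity))

end ZeroAtInfty

theorem exists_finite_image_dist_lt_of_totallyBounded {α : Type*} [PseudoMetricSpace α] {K : Set α}
    (hK : TotallyBounded K) {ε : ℝ} (hε : 0 < ε) :
    ∃ π : α → α, (π '' K).Finite ∧ ∀ x ∈ K, dist x (π x) < ε := by
  obtain ⟨t, ht, hcov⟩ := Metric.totallyBounded_iff.1 hK ε hε
  have hnear : ∀ x ∈ K, ∃ y ∈ t, dist x y < ε := fun x hx => by simpa using hcov hx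
  choose! π hπt hπ using hnear
  exact ⟨π, ht.subset (Set.image_subset_iff.2 hπt), hπ⟩

theorem exists_seq_finite_image_dist_lt_of_totallyBounded {α : Type*} [PseudoMetricSpace α]
    {K : Set α} (hK : TotallyBounded K) (x₀ : α) {δ : ℕ → ℝ} (hδ : ∀ n, 0 < δ n) :
    ∃ p : ℕ → α → α, (∀ x, p 0 x = x₀) ∧ (∀ n, (p n '' K).Finite) ∧
      ∀ n, ∀ x ∈ K, dist x (p (n + 1) x) < δ n := by
  choose π hπfin hπ using fun n => exists_finite_image_dist_lt_of_totallyBounded hK (hδ n)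
  let p : ℕ → α → α
    | 0 => fun _ => x₀
    | n + 1 => π n
  have hpfin : ∀ n, (p n '' K).Finite
    | 0 => (Set.finite_singleton x₀).subset (by simp [p])
    | n + 1 => hπfin n
  exact ⟨p, fun _ => rfl, hpfin, hπ⟩

theorem tendsto_smallSets_nhds_zero_of_norm_le {ι E : Type*} [SeminormedAddCommGroup E]
    {l : Filter ι} {G : ι → Set E} {r : ι → ℝ} (hG : ∀ i, ∀ x ∈ G i, ‖x‖ ≤ r i)
    (hr : Tendsto r l (𝓝 0)) : Tendsto G l (𝓝 0).smallSets := by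
  rw [tendsto_smallSets_iff]
  intro s hs
  obtain ⟨ε, hε, hball⟩ := Metric.mem_nhds_iff.1 hs
  filter_upwards [hr.eventually_lt_const hε] with i hi x hx
  exact hball (mem_ball_zero_iff.2 ((hG i x hx).trans_lt hi))

theorem exists_seq_tendsto_range_eq_iUnion {α : Type*} {l : Filter α} {G : ℕ → Set α}
    (hfin : ∀ n, (G n).Finite) (hne : ∀ n, (G n).Nonempty) (hG : Tendsto G atTop l.smallSets) :
    ∃ a : ℕ → α, Tendsto a atTop l ∧ Set.range a = ⋃ n, G n := by
  have := fun n => (hfin n).to_subtype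
  have := fun n => (hne n).to_subtype
  have : Infinite (Σ n, G n) := Infinite.of_surjective _ Sigma.fst_surjective
  obtain ⟨e⟩ := nonempty_equiv_of_countable (α := ℕ) (β := Σ n, G n)
  refine ⟨(fun i => (i.2 : α)) ∘ e, ?_, ?_⟩
  · suffices Tendsto (fun i : Σ n, G n => (i.2 : α)) cofinite l by
      rw [← Nat.cofinite_eq_atTop]
      exact this.comp e.injective.tendsto_cofinite
    intro s hs
    obtain ⟨N, hN⟩ := eventually_atTop.1 (tendsto_smallSets_iff.1 hG s hs)
    have hlt : (Sigma.fst ⁻¹' {n | n < N} : Set (Σ n, G n)).Finite :=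
      (Set.finite_lt_nat N).preimage' fun n _ => Set.range_sigmaMk n ▸ Set.finite_range _
    exact hlt.subset fun i hi => lt_of_not_ge fun hn => hi (hN i.1 hn i.2.2)
  · rw [e.surjective.range_comp, Set.range_sigma_eq_iUnion_range]
    simp only [Subtype.range_coe]

theorem mem_of_tendsto_of_two_pow_smul_sub_mem {E : Type*} [AddCommGroup E] [Module ℝ E]
    [TopologicalSpace E] [ContinuousAdd E] [ContinuousSMul ℝ E] {s : Set E} (hs : Convex ℝ s)
    (hsc : IsClosed s) {p : ℕ → E} {x : E} (hp0 : p 0 = 0)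
    (hp : ∀ n, (2 : ℝ) ^ (n + 1) • (p (n + 1) - p n) ∈ s) (hx : Tendsto p atTop (𝓝 x)) :
    x ∈ s := by
  have hpartial : ∀ n, ∀ y ∈ s, p n + (1 / 2 : ℝ) ^ n • y ∈ s := by
    intro n
    induction n with
    | zero => simp [hp0]
    | succ n ih =>
      intro y hy
      have hpow : (1 / 2 : ℝ) ^ n * (1 / 2 * 2 ^ (n + 1)) = 1 := by
        rw [← mul_assoc, ← pow_succ, ← mul_pow]
        norm_num
      convert ih _ (hs (hp n) hy (a := 1 / 2) (b := 1 / 2) (by norm_num) (by norm_num)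
        (by norm_num)) using 1
      rw [smul_add, smul_smul (1 / 2 : ℝ) (2 ^ (n + 1)), smul_smul, hpow]
      module
  have hlim : Tendsto (fun n : ℕ => p n + (1 / 2 : ℝ) ^ n • (2 : ℝ) ^ (0 + 1) • (p (0 + 1) - p 0))
      atTop (𝓝 x) := by
    simpa using hx.add ((tendsto_pow_atTop_nhds_zero_of_lt_one (r := (1 / 2 : ℝ))
      (by norm_num) (by norm_num)).smul_const _)
  exact hsc.mem_of_tendsto hlim (Eventually.of_forall fun n => hpartial n _ (hp 0))

theorem norm_two_pow_smul_sub_le {E : Type*} [SeminormedAddCommGroup E] [NormedSpace ℝ E]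
    {x y z : E} {n : ℕ} (hy : dist x y ≤ (1 / 4) ^ n) (hz : dist x z ≤ (1 / 4) ^ (n + 1)) :
    ‖(2 : ℝ) ^ (n + 2) • (z - y)‖ ≤ 5 * (1 / 2) ^ n := by
  have hzy : ‖z - y‖ ≤ (1 / 4) ^ (n + 1) + (1 / 4) ^ n := by
    rw [← dist_eq_norm]
    exact (dist_triangle_left _ _ x).trans (add_le_add hz hy)
  have hpow : (2 : ℝ) ^ n * (1 / 4) ^ n = (1 / 2) ^ n := by rw [← mul_pow]; norm_num
  calc ‖(2 : ℝ) ^ (n + 2) • (z - y)‖ = 2 ^ (n + 2) * ‖z - y‖ := by simp [norm_smul]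
    _ ≤ 2 ^ (n + 2) * ((1 / 4) ^ (n + 1) + (1 / 4) ^ n) := by gcongr
    _ = 5 * (2 ^ n * (1 / 4) ^ n) := by ring
    _ = 5 * (1 / 2) ^ n := by rw [hpow]

theorem exists_tendsto_zero_subset_closedConvexHull {E : Type*} [NormedAddCommGroup E]
    [NormedSpace ℝ E] {K : Set E} (hK : TotallyBounded K) :
    ∃ a : ℕ → E, Tendsto a atTop (𝓝 0) ∧ K ⊆ closedConvexHull ℝ (Set.range a) := by
  obtain rfl | hne := K.eq_empty_or_nonempty
  · exact ⟨0, tendsto_const_nhds, Set.empty_subset _⟩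
  obtain ⟨p, hp0, hpfin, hp⟩ := exists_seq_finite_image_dist_lt_of_totallyBounded hK 0
    (δ := fun n => (1 / 4 : ℝ) ^ n) (fun n => by positivity)
  -- Writing `x = ∑ₙ 2⁻⁽ⁿ⁺¹⁾ • d n x` exhibits `x` as an infinite convex combination.
  let d : ℕ → E → E := fun n x => (2 : ℝ) ^ (n + 1) • (p (n + 1) x - p n x)
  have hdfin : ∀ n, (d n '' K).Finite := fun n =>
    (Set.Finite.image2 (fun y z => (2 : ℝ) ^ (n + 1) • (y - z)) (hpfin (n + 1))
      (hpfin n)).subset <| Set.image_subset_iff.2 fun x hx =>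
        Set.mem_image2_of_mem (Set.mem_image_of_mem _ hx) (Set.mem_image_of_mem _ hx)
  have hdnorm : ∀ n, ∀ y ∈ d (n + 1) '' K, ‖y‖ ≤ 5 * (1 / 2 : ℝ) ^ n := by
    rintro n _ ⟨x, hx, rfl⟩
    exact norm_two_pow_smul_sub_le (hp n x hx).le (hp (n + 1) x hx).le
  have hd : Tendsto (fun n => d n '' K) atTop (𝓝 0).smallSets := by
    refine (tendsto_add_atTop_iff_nat 1).1 (tendsto_smallSets_nhds_zero_of_norm_le hdnorm ?_)
    simpa using (tendsto_pow_atTop_nhds_zero_of_lt_one (r := (1 / 2 : ℝ))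
      (by norm_num) (by norm_num)).const_mul 5
  obtain ⟨a, ha, hrange⟩ :=
    exists_seq_tendsto_range_eq_iUnion hdfin (fun n => hne.image (d n)) hd
  refine ⟨a, ha, fun x hx => ?_⟩
  refine mem_of_tendsto_of_two_pow_smul_sub_mem (p := fun n => p n x) convex_closedConvexHull
    isClosed_closedConvexHull (hp0 x) (fun n => ?_) ?_
  · apply subset_closedConvexHull
    rw [hrange]
    exact Set.mem_iUnion_of_mem n ⟨x, hx, rfl⟩
  · rw [← tendsto_add_atTop_iff_nat 1, tendsto_iff_dist_tendsto_zero]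
    exact squeeze_zero (fun n => dist_nonneg)
      (fun n => (dist_comm _ _).trans_le (hp n x hx).le)
      (tendsto_pow_atTop_nhds_zero_of_lt_one (by norm_num) (by norm_num))

theorem exists_zeroAtInfty_norm_le_norm_pointwiseEval {𝕜 X Y : Type*} [RCLike 𝕜]
    [NormedAddCommGroup X] [NormedSpace 𝕜 X] [NormedAddCommGroup Y] [NormedSpace 𝕜 Y]
    {T : X →L[𝕜] Y} (hT : IsCompactOperator T) :
    ∃ f : C₀(ℕ, X →L[𝕜] 𝕜), ∀ x, ‖T x‖ ≤ ‖pointwiseEval f x‖ := by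
  obtain ⟨K, hK, hTK⟩ := IsCompactOperator.image_closedBall_subset_compact
    (f := (T.precomp 𝕜 : (Y →L[𝕜] 𝕜) →L[𝕜] (X →L[𝕜] 𝕜)).toLinearMap)
    (isCompactOperator_precomp hT) 1
  obtain ⟨a, ha, hKa⟩ := exists_tendsto_zero_subset_closedConvexHull hK.totallyBounded
  let f : C₀(ℕ, X →L[𝕜] 𝕜) :=
    { toFun := a
      continuous_toFun := continuous_of_discreteTopology
      zero_at_infty' := by rwa [cocompact_eq_cofinite, Nat.cofinite_eq_atTop] }
  refine ⟨f, fun x => ?_⟩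
  let s : Set (X →L[𝕜] 𝕜) := {φ | ‖φ x‖ ≤ ‖pointwiseEval f x‖}
  have hs : closedConvexHull ℝ (Set.range a) ⊆ s := by
    refine closedConvexHull_min ?_ ?_ ?_
    · rintro _ ⟨n, rfl⟩
      exact norm_apply_le_norm_zeroAtInfty (pointwiseEval f x) n
    · have hconv := (convex_closedBall (0 : 𝕜) ‖pointwiseEval f x‖).linear_preimage
        ((ContinuousLinearMap.apply 𝕜 𝕜 x).restrictScalars ℝ).toLinearMap
      simpa [Set.preimage, s] using hconv
    · exact isClosed_le (by fun_prop) continuous_const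
  obtain ⟨φ, hφ, hφx⟩ := exists_dual_vector'' 𝕜 (T x)
  have hφs : φ.comp T ∈ s := hs (hKa (hTK ⟨φ, by simpa using hφ, rfl⟩))
  calc ‖T x‖ = ‖φ (T x)‖ := by simp [hφx]
    _ ≤ ‖pointwiseEval f x‖ := hφs

theorem exists_extension_to_topologicalClosure_span_range {𝕜 X Y Z : Type*}
    [NontriviallyNormedField 𝕜] [NormedAddCommGroup X] [NormedSpace 𝕜 X] [NormedAddCommGroup Y]
    [NormedSpace 𝕜 Y] [CompleteSpace Y] [NormedAddCommGroup Z] [NormedSpace 𝕜 Z]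
    (S : X →L[𝕜] Z) (T : X →L[𝕜] Y) (hTS : ∀ x, ‖T x‖ ≤ ‖S x‖) :
    ∃ R : (Submodule.span 𝕜 (Set.range S)).topologicalClosure →L[𝕜] Y,
      (∀ z, ‖R z‖ ≤ ‖z‖) ∧
      ∀ x, R ⟨S x, (Submodule.span 𝕜 (Set.range S)).le_topologicalClosure
        (Submodule.subset_span ⟨x, rfl⟩)⟩ = T x := by
  set V := (Submodule.span 𝕜 (Set.range S)).topologicalClosure with hV
  let e : X →ₗ[𝕜] V := S.toLinearMap.codRestrict V fun x =>
    Submodule.le_topologicalClosure _ (Submodule.subset_span ⟨x, rfl⟩)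
  have hspan : (Submodule.span 𝕜 (Set.range S) : Set Z) = Set.range S :=
    congrArg SetLike.coe (Submodule.span_eq (LinearMap.range S.toLinearMap))
  have hdense : DenseRange e := by
    rintro ⟨z, hz⟩
    rw [closure_subtype, ← Set.range_comp]
    rwa [hV, ← SetLike.mem_coe, Submodule.topologicalClosure_coe, hspan] at hz
  have hnorm : ∀ x, ‖T.toLinearMap x‖ ≤ 1 * ‖e x‖ := by simpa [e] using hTS
  refine ⟨T.toLinearMap.extendOfNorm e, fun z => ?_, LinearMap.extendOfNorm_eq hdense ⟨1, hnorm⟩⟩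
  simpa using LinearMap.norm_extendOfNorm_apply_le hdense 1 hnorm z

theorem compact_factors_through_c0_general {𝕜 X Y : Type*} [RCLike 𝕜]
    [NormedAddCommGroup X] [NormedSpace 𝕜 X]
    [NormedAddCommGroup Y] [NormedSpace 𝕜 Y] [CompleteSpace Y]
    (T : X →L[𝕜] Y) (hT : IsCompactOperator T) :
    ∃ S : X →L[𝕜] ZeroAtInftyContinuousMap ℕ 𝕜,
      IsCompactOperator S ∧
      ∃ R₀ : (Submodule.span 𝕜 (Set.range S)).topologicalClosure →L[𝕜] Y,
        (∀ z : (Submodule.span 𝕜 (Set.range S)).topologicalClosure, ‖R₀ z‖ ≤ ‖z‖) ∧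
        ∀ x : X,
          R₀ ⟨S x, (Submodule.span 𝕜 (Set.range S)).le_topologicalClosure
            (Submodule.subset_span ⟨x, rfl⟩)⟩ = T x := by
  obtain ⟨f, hf⟩ := exists_zeroAtInfty_norm_le_norm_pointwiseEval hT
  exact ⟨pointwiseEval f, isCompactOperator_pointwiseEval f,
    exists_extension_to_topologicalClosure_span_range (pointwiseEval f) T hf⟩

/-- Every compact operator `T : X → Y` between Banach spaces factors through a closed subspace
of `c₀`: there are a compact operator `S : X → c₀` and a bounded operator `R₀` of norm at most
one (i.e. `‖R₀ z‖ ≤ ‖z‖` for all `z`), defined on the closed linear span of `S(X)` in `c₀`,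
with `R₀ (S x) = T x` for all `x`. -/
theorem compact_factors_through_c0 {𝕜 X Y : Type*} [RCLike 𝕜]
    [NormedAddCommGroup X] [NormedSpace 𝕜 X] [CompleteSpace X]
    [NormedAddCommGroup Y] [NormedSpace 𝕜 Y] [CompleteSpace Y]
    (T : X →L[𝕜] Y) (hT : IsCompactOperator T) :
    ∃ S : X →L[𝕜] ZeroAtInftyContinuousMap ℕ 𝕜,
      IsCompactOperator S ∧
      ∃ R₀ : (Submodule.span 𝕜 (Set.range S)).topologicalClosure →L[𝕜] Y,
        (∀ z : (Submodule.span 𝕜 (Set.range S)).topologicalClosure, ‖R₀ z‖ ≤ ‖z‖) ∧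
        ∀ x : X,
          R₀ ⟨S x, (Submodule.span 𝕜 (Set.range S)).le_topologicalClosure
            (Submodule.subset_span ⟨x, rfl⟩)⟩ = T x :=
  compact_factors_through_c0_general T hT
end

section
/- Let T be a compact linear operator from a Banach space X into a 𝒫_λ-space Y. Then for every ε > 0 there exist a sequence (u_n) in X* with ‖u_n‖ → 0 and sup_n ‖u_n‖ ≤ ‖T‖ + ε, and a sequence (y_n) in Y with sup_{‖v‖≤1, v∈Y*} Σ_{n=1}^∞ |v(y_n)| ≤ λ, such that Tx = Σ_{n=1}^∞ u_n(x) y_n for every x ∈ X (the series converging in norm). -/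
open Filter

universe u v

/-- A Banach space `Y` is a `𝒫_λ`-space if for all Banach spaces `W ⊆ Z` (via a linear isometric
embedding) every bounded operator `W → Y` extends to `Z` with norm at most `λ` times bigger. -/
def IsPLambdaSpace (𝕜 : Type*) [RCLike 𝕜] (Y : Type*) [NormedAddCommGroup Y]
    [NormedSpace 𝕜 Y] (lam : ℝ) : Prop :=
  ∀ (W : Type u) (Z : Type v) [NormedAddCommGroup W] [NormedSpace 𝕜 W] [CompleteSpace W]
    [NormedAddCommGroup Z] [NormedSpace 𝕜 Z] [CompleteSpace Z]
    (i : W →ₗᵢ[𝕜] Z) (T : W →L[𝕜] Y),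
    ∃ Ttilde : Z →L[𝕜] Y, (∀ w : W, Ttilde (i w) = T w) ∧ ‖Ttilde‖ ≤ lam * ‖T‖

/-!
By Schauder's argument, the functionals `g ∘ T` with `‖g‖ ≤ 1` form a totally bounded set, which by
a lemma of Grothendieck lies in the closed convex hull of a null sequence `u` in `X*` with norms at
most `‖T‖ + ε`. Hence `‖T x‖ ≤ sup_n |u_n x|`: the operator `A x = (u_n x)_n` into `c₀` dominates
`T`, so `T = S ∘ A` for a contraction `S` on the range of `A`. Extend `S` to `L : c₀ → Y` with
`‖L‖ ≤ λ` and put `y_n = L e_n`, the images of the unit vectors of `c₀`.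
-/

section

open scoped ZeroAtInfty Topology Pointwise
open Metric Set

section NullSequences

variable {E : Type*} [NormedAddCommGroup E]

theorem exists_tendsto_zero_range_of_finite_norm_ge {U : Set E}
    (hU : ∀ r > 0, {x ∈ U | r ≤ ‖x‖}.Finite) :
    ∃ w : ℕ → E, Tendsto w atTop (𝓝 0) ∧ U ⊆ range w ∧ range w ⊆ insert 0 U := by
  have hcover : U ⊆ {0} ∪ ⋃ n : ℕ, {x ∈ U | 1 / ((n : ℝ) + 1) ≤ ‖x‖} := fun x hx ↦ by
    rcases eq_or_ne x 0 with rfl | hx0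
    · exact Or.inl rfl
    · obtain ⟨n, hn⟩ := exists_nat_one_div_lt (norm_pos_iff.2 hx0)
      exact Or.inr (mem_iUnion.2 ⟨n, hx, hn.le⟩)
  have hcount : U.Countable := ((countable_singleton 0).union
    (countable_iUnion fun n ↦ (hU _ Nat.one_div_pos_of_nat).countable)).mono hcover
  obtain ⟨e, he⟩ := hcount.to_subtype.exists_injective_nat
  have hw : ∀ x : U, Function.extend e Subtype.val 0 (e x) = (x : E) := he.extend_apply _ _
  have hw' : ∀ n, Function.extend e Subtype.val 0 n ≠ (0 : E) → ∃ x, e x = n := fun n hn ↦ by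
    contrapose! hn
    exact Function.extend_apply' _ _ _ (by simpa using hn)
  refine ⟨Function.extend e Subtype.val 0, ?_, fun x hx ↦ ⟨e ⟨x, hx⟩, hw ⟨x, hx⟩⟩, ?_⟩
  · rw [← Nat.cofinite_eq_atTop, Metric.tendsto_nhds]
    intro r hr
    refine (((hU r hr).preimage Subtype.val_injective.injOn).image e).subset fun n hn ↦ ?_
    replace hn : r ≤ ‖Function.extend e Subtype.val (0 : ℕ → E) n‖ := by simpa using hn
    obtain ⟨x, rfl⟩ := hw' n (norm_pos_iff.1 (hr.trans_le hn))
    exact ⟨x, ⟨x.2, hw x ▸ hn⟩, rfl⟩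
  · rintro _ ⟨n, rfl⟩
    refine or_iff_not_imp_left.2 fun hn ↦ ?_
    obtain ⟨x, rfl⟩ := hw' n hn
    exact hw x ▸ x.2

theorem exists_tendsto_zero_range_iUnion {S : ℕ → Set E} (hS : ∀ j, (S j).Finite) {b : ℕ → ℝ}
    (hb : Tendsto b atTop (𝓝 0)) (hSb : ∀ j, ∀ s ∈ S j, ‖s‖ ≤ b j) :
    ∃ w : ℕ → E, Tendsto w atTop (𝓝 0) ∧ ⋃ j, S j ⊆ range w ∧ range w ⊆ insert 0 (⋃ j, S j) := by
  refine exists_tendsto_zero_range_of_finite_norm_ge fun r hr ↦ ?_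
  obtain ⟨J, hJ⟩ := eventually_atTop.1 (hb.eventually_lt_const hr)
  refine ((finite_Iio J).biUnion fun j _ ↦ hS j).subset ?_
  rintro s ⟨hs, hrs⟩
  obtain ⟨j, hj⟩ := mem_iUnion.1 hs
  have hjJ : j < J := not_le.1 fun h ↦ (hJ j h).not_ge (hrs.trans (hSb j s hj))
  exact mem_biUnion hjJ hj

end NullSequences

section TotallyBounded

theorem totallyBounded_image_of_dist_le {α β γ : Type*} [PseudoMetricSpace β]
    [PseudoMetricSpace γ] {f : α → β} {g : α → γ} {s : Set α}
    (h : ∀ x y, dist (g x) (g y) ≤ dist (f x) (f y)) (hf : TotallyBounded (f '' s)) :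
    TotallyBounded (g '' s) := by
  let _ : PseudoMetricSpace α := PseudoMetricSpace.induced f inferInstance
  have hs : TotallyBounded s := (totallyBounded_image_iff ⟨rfl⟩).1 hf
  have hg : LipschitzWith 1 g := .of_dist_le_mul fun x y ↦ (h x y).trans_eq (one_mul _).symm
  exact hs.image hg.uniformContinuous

theorem exists_finite_tendsto_sum_of_totallyBounded {E : Type*} [SeminormedAddCommGroup E]
    {K : Set E} (hK : TotallyBounded K) {δ : ℕ → ℝ} (hδ : ∀ j, 0 < δ j) (hδ_anti : Antitone δ)
    (hδ_lim : Tendsto δ atTop (𝓝 0)) (hKδ : ∀ k ∈ K, ‖k‖ ≤ δ 0) :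
    ∃ S : ℕ → Set E, (∀ j, (S j).Finite) ∧ (∀ j, ∀ s ∈ S j, ‖s‖ ≤ δ j) ∧
      ∀ k ∈ K, ∃ s : ℕ → E, (∀ j, s j ∈ S j) ∧
        Tendsto (fun n ↦ ∑ j ∈ Finset.range n, s j) atTop (𝓝 k) := by
  choose N hNK hN_fin hN_cover using fun j ↦
    finite_approx_of_totallyBounded hK (δ (j + 1) / 2) (half_pos (hδ (j + 1)))
  let F : ℕ → Set E := fun j ↦ Nat.casesOn j {0} N
  have hF_fin : ∀ j, (F j).Finite := by
    rintro (_ | j)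
    exacts [finite_singleton 0, hN_fin j]
  refine ⟨fun j ↦ (F (j + 1) - F j) ∩ closedBall 0 (δ j),
    fun j ↦ ((hF_fin (j + 1)).sub (hF_fin j)).inter_of_left _,
    fun j s hs ↦ mem_closedBall_zero_iff.1 hs.2, fun k hk ↦ ?_⟩
  have hnear : ∀ j, ∃ f ∈ N j, ‖k - f‖ < δ (j + 1) / 2 := fun j ↦ by
    simpa [dist_eq_norm] using hN_cover j hk
  choose g hgN hgk using hnear
  -- The summands are the increments of the approximations `0, g 0, g 1, …` of `k` by net points.
  let f : ℕ → E := fun j ↦ Nat.casesOn j 0 g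
  have hfF : ∀ j, f j ∈ F j := by
    rintro (_ | j)
    exacts [rfl, hgN j]
  have hf_step : ∀ j, ‖f (j + 1) - f j‖ ≤ δ j := by
    rintro (_ | j)
    · simpa [f] using hKδ _ (hNK 0 (hgN 0))
    · calc ‖g (j + 1) - g j‖ = ‖(k - g j) - (k - g (j + 1))‖ := by congr 1; abel
        _ ≤ ‖k - g j‖ + ‖k - g (j + 1)‖ := norm_sub_le _ _
        _ ≤ δ (j + 1) := by linarith [hgk j, hgk (j + 1), hδ_anti (Nat.le_succ (j + 1))]
  have hf_lim : Tendsto f atTop (𝓝 k) := by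
    rw [← tendsto_add_atTop_iff_nat 1, tendsto_iff_norm_sub_tendsto_zero]
    refine squeeze_zero (fun _ ↦ norm_nonneg _) (fun j ↦ ?_)
      ((tendsto_add_atTop_iff_nat 1).2 hδ_lim)
    rw [norm_sub_rev]
    exact (hgk j).le.trans (half_le_self (hδ _).le)
  refine ⟨fun j ↦ f (j + 1) - f j,
    fun j ↦ ⟨Set.sub_mem_sub (hfF (j + 1)) (hfF j), mem_closedBall_zero_iff.2 (hf_step j)⟩, ?_⟩
  simpa only [Finset.sum_range_sub, show f 0 = 0 from rfl, sub_zero] using hf_lim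

end TotallyBounded

section ConvexHull

theorem mem_of_tendsto_sum_smul {E : Type*} [AddCommGroup E] [Module ℝ E] [TopologicalSpace E]
    [ContinuousSMul ℝ E] {C : Set E} (hC : Convex ℝ C) (hC_closed : IsClosed C)
    {a : ℕ → ℝ} (ha : ∀ j, 0 ≤ a j) (ha_sum : HasSum a 1) {w : ℕ → E} (hw : ∀ j, w j ∈ C) {x : E}
    (hx : Tendsto (fun n ↦ ∑ j ∈ Finset.range n, a j • w j) atTop (𝓝 x)) : x ∈ C := by
  have hlim : Tendsto (fun n ↦ (Finset.range n).centerMass a w) atTop (𝓝 x) := by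
    simpa [Finset.centerMass] using (ha_sum.tendsto_sum_nat.inv₀ one_ne_zero).smul hx
  refine hC_closed.mem_of_tendsto hlim ?_
  filter_upwards [ha_sum.tendsto_sum_nat.eventually_const_lt one_pos] with n hn
  exact hC.centerMass_mem (fun j _ ↦ ha j) hn fun j _ ↦ hw j

theorem exists_antitone_hasSum_one_le_mul {M R : ℝ} (hM : 0 ≤ M) (hMR : M < R) :
    ∃ a b : ℕ → ℝ, (∀ j, 0 < a j) ∧ Antitone a ∧ HasSum a 1 ∧
      (∀ j, 0 < b j) ∧ Antitone b ∧ Tendsto b atTop (𝓝 0) ∧ b 0 = R ∧ M ≤ a 0 * b 0 := by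
  have hR : 0 < R := hM.trans_lt hMR
  obtain ⟨c, hMc, hcR⟩ := exists_between hMR
  have hc : 0 < c / R := div_pos (hM.trans_lt hMc) hR
  let ρ : ℝ := 1 - c / R
  have hρ0 : 0 < ρ := sub_pos.2 ((div_lt_one hR).2 hcR)
  have hρ1 : ρ < 1 := sub_lt_self _ hc
  have hρ : 1 - ρ = c / R := sub_sub_cancel _ _
  have hpow_anti : Antitone (ρ ^ · : ℕ → ℝ) := pow_right_anti₀ hρ0.le hρ1.le
  have hpow_lim := tendsto_pow_atTop_nhds_zero_of_lt_one hρ0.le hρ1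
  have hpow_sum := (hasSum_geometric_of_lt_one hρ0.le hρ1).mul_left (c / R)
  rw [hρ, mul_inv_cancel₀ hc.ne'] at hpow_sum
  refine ⟨fun j ↦ c / R * ρ ^ j, fun j ↦ R * ρ ^ j, fun j ↦ by positivity,
    hpow_anti.const_mul hc.le, hpow_sum, fun j ↦ by positivity, hpow_anti.const_mul hR.le,
    by simpa using hpow_lim.const_mul R, by simp, ?_⟩
  simpa [div_mul_cancel₀ _ hR.ne'] using hMc.le

theorem exists_tendsto_zero_subset_closedConvexHull_range {E : Type*} [NormedAddCommGroup E]
    [NormedSpace ℝ E] {K : Set E} (hK : TotallyBounded K) {M R : ℝ} (hM : 0 ≤ M) (hMR : M < R)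
    (hKM : ∀ k ∈ K, ‖k‖ ≤ M) :
    ∃ w : ℕ → E, Tendsto w atTop (𝓝 0) ∧ (∀ n, ‖w n‖ ≤ R) ∧
      K ⊆ closedConvexHull ℝ (range w) := by
  obtain ⟨a, b, ha, ha_anti, ha_sum, hb, hb_anti, hb_lim, rfl, hMab⟩ :=
    exists_antitone_hasSum_one_le_mul hM hMR
  obtain ⟨S, hS_fin, hS_norm, hS_sum⟩ := exists_finite_tendsto_sum_of_totallyBounded hK
    (δ := fun j ↦ a j * b j) (fun j ↦ mul_pos (ha j) (hb j))
    (fun i j hij ↦ mul_le_mul (ha_anti hij) (hb_anti hij) (hb j).le (ha i).le)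
    (by simpa using ha_sum.summable.tendsto_atTop_zero.mul hb_lim)
    fun k hk ↦ (hKM k hk).trans hMab
  -- Rescaling the `j`-th summands by `(a j)⁻¹` makes every `k ∈ K` an infinite convex combination.
  have hSb : ∀ j, ∀ s ∈ (a j)⁻¹ • S j, ‖s‖ ≤ b j := by
    rintro j _ ⟨s, hs, rfl⟩
    simp only [norm_smul, norm_inv, Real.norm_of_nonneg (ha j).le]
    exact (inv_mul_le_iff₀ (ha j)).2 (hS_norm j s hs)
  obtain ⟨w, hw_lim, hSw, hwS⟩ :=
    exists_tendsto_zero_range_iUnion (fun j ↦ (hS_fin j).smul_set) hb_lim hSb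
  refine ⟨w, hw_lim, fun n ↦ ?_, fun k hk ↦ ?_⟩
  · rcases hwS (mem_range_self n) with h0 | hn
    · simpa [h0] using (hb 0).le
    · obtain ⟨j, hj⟩ := mem_iUnion.1 hn
      exact (hSb j _ hj).trans (hb_anti (Nat.zero_le j))
  · obtain ⟨s, hsS, hs_lim⟩ := hS_sum k hk
    refine mem_of_tendsto_sum_smul convex_closedConvexHull isClosed_closedConvexHull
      (fun j ↦ (ha j).le) ha_sum (w := fun j ↦ (a j)⁻¹ • s j)
      (fun j ↦ subset_closedConvexHull <| hSw <| mem_iUnion.2 ⟨j, smul_mem_smul_set (hsS j)⟩) ?_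
    simpa only [smul_inv_smul₀ (ha _).ne'] using hs_lim

end ConvexHull

section C0

theorem norm_le_iff_forall_norm_apply_le {ι E : Type*} [TopologicalSpace ι]
    [NormedAddCommGroup E] {f : C₀(ι, E)} {C : ℝ} (hC : 0 ≤ C) : ‖f‖ ≤ C ↔ ∀ i, ‖f i‖ ≤ C := by
  rw [← ZeroAtInftyContinuousMap.norm_toBCF_eq_norm]
  exact BoundedContinuousFunction.norm_le hC

variable {ι : Type*} [TopologicalSpace ι] [DiscreteTopology ι]

section NormedField

variable {𝕜 : Type*} [NormedField 𝕜]

open scoped Classical in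
/-- The `i`-th unit vector of `c₀(ι)`, where `c₀(ι)` is encoded as `C₀(ι, 𝕜)` for discrete `ι`. -/
noncomputable def c0Single (𝕜 : Type*) [NormedField 𝕜] (i : ι) : C₀(ι, 𝕜) where
  toFun := Pi.single i 1
  continuous_toFun := continuous_of_discreteTopology
  zero_at_infty' := by
    rw [cocompact_eq_cofinite]
    refine tendsto_const_nhds.congr' ?_
    filter_upwards [(finite_singleton i).compl_mem_cofinite] with j hj
    exact (Pi.single_eq_of_ne (M := fun _ ↦ 𝕜) hj 1).symm

open scoped Classical in
theorem sum_smul_c0Single_apply (s : Finset ι) (c : ι → 𝕜) (j : ι) :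
    (∑ i ∈ s, c i • c0Single 𝕜 i) j = if j ∈ s then c j else 0 := by
  have hcoe : ∀ f : ι → C₀(ι, 𝕜), (∑ i ∈ s, f i) j = ∑ i ∈ s, f i j := fun f ↦
    map_sum (⟨⟨fun g : C₀(ι, 𝕜) ↦ g j, rfl⟩, fun _ _ ↦ rfl⟩ : C₀(ι, 𝕜) →+ 𝕜) f s
  simp [hcoe, c0Single, Pi.single_apply]

theorem hasSum_smul_c0Single (f : C₀(ι, 𝕜)) : HasSum (fun i ↦ f i • c0Single 𝕜 i) f := by
  have hf : Tendsto f cofinite (𝓝 0) := cocompact_eq_cofinite ι ▸ f.zero_at_infty'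
  classical
  rw [HasSum, SummationFilter.unconditional_filter, Metric.tendsto_atTop]
  intro δ hδ
  have hfin : {i | ¬‖f i‖ < δ / 2}.Finite := by
    simpa using (Metric.tendsto_nhds.1 hf _ (half_pos hδ))
  refine ⟨hfin.toFinset, fun s hs ↦ ?_⟩
  rw [dist_comm, dist_eq_norm]
  refine ((norm_le_iff_forall_norm_apply_le (half_pos hδ).le).2 fun i ↦ ?_).trans_lt
    (half_lt_self hδ)
  rw [ZeroAtInftyContinuousMap.sub_apply, sum_smul_c0Single_apply]
  split_ifs with hi
  · simpa using (half_pos hδ).le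
  · have hi' : ‖f i‖ < δ / 2 := by
      by_contra h
      exact hi (hs (hfin.mem_toFinset.2 h))
    simpa using hi'.le

end NormedField

section Functionals

variable {𝕜 X : Type*} [NontriviallyNormedField 𝕜] [NormedAddCommGroup X] [NormedSpace 𝕜 X]

/-- The operator `x ↦ (u i x)_i` into `c₀(ι)` given by a null family `u` of functionals. -/
def functionalsToC0 (u : ι → X →L[𝕜] 𝕜) (hu : Tendsto u cofinite (𝓝 0)) : X →ₗ[𝕜] C₀(ι, 𝕜) where
  toFun x :=
    { toFun i := u i x
      continuous_toFun := continuous_of_discreteTopology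
      zero_at_infty' := by
        rw [cocompact_eq_cofinite]
        simpa [Function.comp_def] using
          ((ContinuousLinearMap.apply 𝕜 𝕜 x).continuous.tendsto 0).comp hu }
  map_add' x z := by ext i; exact map_add (u i) x z
  map_smul' c x := by ext i; exact map_smul (u i) c x

theorem functionalsToC0_apply (u : ι → X →L[𝕜] 𝕜) (hu : Tendsto u cofinite (𝓝 0)) (x : X) (i : ι) :
    functionalsToC0 u hu x i = u i x :=
  rfl

end Functionals

variable {𝕜 : Type*} [RCLike 𝕜]

theorem sum_norm_apply_c0Single_le (φ : C₀(ι, 𝕜) →L[𝕜] 𝕜) (s : Finset ι) :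
    ∑ i ∈ s, ‖φ (c0Single 𝕜 i)‖ ≤ ‖φ‖ := by
  choose c hc_norm hc using fun i ↦ RCLike.exists_norm_eq_mul_self (φ (c0Single 𝕜 i))
  have hunit : ‖∑ i ∈ s, c i • c0Single 𝕜 i‖ ≤ 1 := by
    refine (norm_le_iff_forall_norm_apply_le zero_le_one).2 fun i ↦ ?_
    rw [sum_smul_c0Single_apply]
    split_ifs
    · exact (hc_norm i).le
    · simp
  have hsum : φ (∑ i ∈ s, c i • c0Single 𝕜 i) = ((∑ i ∈ s, ‖φ (c0Single 𝕜 i)‖ : ℝ) : 𝕜) := by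
    simp [hc]
  calc ∑ i ∈ s, ‖φ (c0Single 𝕜 i)‖ = ‖φ (∑ i ∈ s, c i • c0Single 𝕜 i)‖ := by
        rw [hsum, RCLike.norm_of_nonneg (Finset.sum_nonneg fun _ _ ↦ norm_nonneg _)]
    _ ≤ ‖φ‖ := φ.unit_le_opNorm _ hunit

theorem summable_norm_apply_c0Single (φ : C₀(ι, 𝕜) →L[𝕜] 𝕜) :
    Summable fun i ↦ ‖φ (c0Single 𝕜 i)‖ :=
  summable_of_sum_le (fun _ ↦ norm_nonneg _) (sum_norm_apply_c0Single_le φ)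

theorem tsum_norm_apply_c0Single_le (φ : C₀(ι, 𝕜) →L[𝕜] 𝕜) :
    ∑' i, ‖φ (c0Single 𝕜 i)‖ ≤ ‖φ‖ :=
  Real.tsum_le_of_sum_le (fun _ ↦ norm_nonneg _) (sum_norm_apply_c0Single_le φ)

end C0

section CompactOperators

variable {𝕜 X Y : Type*} [RCLike 𝕜] [NormedAddCommGroup X] [NormedSpace 𝕜 X]
  [NormedAddCommGroup Y] [NormedSpace 𝕜 Y]

theorem totallyBounded_image_comp_closedBall {T : X →L[𝕜] Y} (hT : IsCompactOperator T) :
    TotallyBounded ((fun g : Y →L[𝕜] 𝕜 ↦ g.comp T) '' closedBall 0 1) := by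
  obtain ⟨Q, hQ, hTQ⟩ := hT.image_closedBall_subset_compact (f := T.toLinearMap) 1
  have : CompactSpace Q := isCompact_iff_compactSpace.1 hQ
  obtain ⟨B, hB⟩ := hQ.isBounded.exists_norm_le
  let restrict : (Y →L[𝕜] 𝕜) → BoundedContinuousFunction Q 𝕜 := fun g ↦
    .mkOfCompact ⟨fun q ↦ g q, by fun_prop⟩
  have hcontr : ∀ g ∈ closedBall (0 : Y →L[𝕜] 𝕜) 1, LipschitzWith 1 g := fun g hg ↦
    g.lipschitz.weaken (NNReal.coe_le_coe.1 (mem_closedBall_zero_iff.1 hg))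
  have hcomp : IsCompact (closure (restrict '' closedBall 0 1)) := by
    refine BoundedContinuousFunction.arzela_ascoli (closedBall 0 B) (isCompact_closedBall 0 B) _
      ?_ ?_
    · rintro _ q ⟨g, hg, rfl⟩
      exact mem_closedBall_zero_iff.2 ((g.le_of_opNorm_le (by simpa using hg) q).trans
        (by simpa using hB q q.2))
    · refine (LipschitzWith.uniformEquicontinuous _ 1 ?_).equicontinuous
      rintro ⟨_, g, hg, rfl⟩
      exact (hcontr g hg).comp (LipschitzWith.subtype_val Q) |>.weaken (by simp)
  refine totallyBounded_image_of_dist_le (f := restrict) (fun g h ↦ ?_)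
    (hcomp.totallyBounded.subset subset_closure)
  rw [dist_eq_norm, ← ContinuousLinearMap.sub_comp]
  refine ContinuousLinearMap.opNorm_le_of_unit_norm dist_nonneg fun x hx ↦ ?_
  have hTx : T x ∈ Q := hTQ ⟨x, by simp [hx], rfl⟩
  simpa [dist_eq_norm, restrict] using
    BoundedContinuousFunction.dist_coe_le_dist (f := restrict g) (g := restrict h) ⟨T x, hTx⟩

theorem exists_norm_le_norm_functionalsToC0 {T : X →L[𝕜] Y} (hT : IsCompactOperator T) {ε : ℝ}
    (hε : 0 < ε) :
    ∃ (u : ℕ → X →L[𝕜] 𝕜) (hu : Tendsto u cofinite (𝓝 0)), (∀ n, ‖u n‖ ≤ ‖T‖ + ε) ∧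
      ∀ x, ‖T x‖ ≤ ‖functionalsToC0 u hu x‖ := by
  have hbound : ∀ k ∈ (fun g : Y →L[𝕜] 𝕜 ↦ g.comp T) '' closedBall 0 1, ‖k‖ ≤ ‖T‖ := by
    rintro _ ⟨g, hg, rfl⟩
    exact (g.opNorm_comp_le T).trans
      (mul_le_of_le_one_left (norm_nonneg T) (mem_closedBall_zero_iff.1 hg))
  obtain ⟨u, hu, hu_norm, hu_hull⟩ := exists_tendsto_zero_subset_closedConvexHull_range
    (totallyBounded_image_comp_closedBall hT) (norm_nonneg T) (lt_add_of_pos_right _ hε) hbound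
  rw [← Nat.cofinite_eq_atTop] at hu
  refine ⟨u, hu, hu_norm, fun x ↦ ?_⟩
  let C : Set (X →L[𝕜] 𝕜) := {k | ‖k x‖ ≤ ‖functionalsToC0 u hu x‖}
  have hC : closedConvexHull ℝ (range u) ⊆ C := by
    refine closedConvexHull_min ?_ ?_ (isClosed_le (by fun_prop) continuous_const)
    · rintro _ ⟨n, rfl⟩
      change ‖functionalsToC0 u hu x n‖ ≤ _
      exact (norm_le_iff_forall_norm_apply_le (norm_nonneg _)).1 le_rfl n
    · simpa [C] using ((convexOn_norm convex_univ).comp_linearMap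
        ((ContinuousLinearMap.apply 𝕜 𝕜 x).toLinearMap.restrictScalars ℝ)).convex_le
          ‖functionalsToC0 u hu x‖
  obtain ⟨g, hg, hgx⟩ := exists_dual_vector'' 𝕜 (T x)
  have hgC : g.comp T ∈ C := hC (hu_hull ⟨g, mem_closedBall_zero_iff.2 hg, rfl⟩)
  simpa [C, hgx] using hgC

end CompactOperators

section Extension

/-- `Y` has the `lam`-extension property for contractions defined on subspaces of `c₀`. Every
`𝒫_λ`-space has it, but it is weaker: by Sobczyk's theorem `c₀` itself has it with `lam = 2`. -/
def ExtendsContractionsFromC0 (𝕜 : Type*) [RCLike 𝕜] (Y : Type*) [NormedAddCommGroup Y]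
    [NormedSpace 𝕜 Y] (lam : ℝ) : Prop :=
  ∀ (W : Submodule 𝕜 C₀(ℕ, 𝕜)) (S : W →ₗ[𝕜] Y), (∀ w, ‖S w‖ ≤ ‖(w : C₀(ℕ, 𝕜))‖) →
    ∃ L : C₀(ℕ, 𝕜) →L[𝕜] Y, (∀ w : W, L w = S w) ∧ ‖L‖ ≤ lam

theorem small_of_rclike (𝕜 : Type*) [RCLike 𝕜] : Small.{v} 𝕜 :=
  small_of_injective (f := fun z : 𝕜 ↦ (RCLike.re z, RCLike.im z)) fun _ _ h ↦
    RCLike.ext (congrArg Prod.fst h) (congrArg Prod.snd h)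

variable {𝕜 Y : Type*} [RCLike 𝕜] [NormedAddCommGroup Y] [NormedSpace 𝕜 Y] {lam : ℝ}

theorem small_zeroAtInfty (ι : Type*) [TopologicalSpace ι] [Small.{v} ι] : Small.{v} C₀(ι, 𝕜) :=
  have := small_of_rclike.{v} 𝕜
  small_of_injective (f := fun f : C₀(ι, 𝕜) ↦ (f : ι → 𝕜)) DFunLike.coe_injective

/-- The copy of a small normed space `E` in another universe `v`, used to apply `IsPLambdaSpace`,
which quantifies over Banach spaces in two fixed universes. -/
noncomputable def shrinkLinearIsometryEquiv (𝕜 E : Type*) [RCLike 𝕜] [NormedAddCommGroup E]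
    [NormedSpace 𝕜 E] [Small.{v} E] : Shrink.{v} E ≃ₗᵢ[𝕜] E where
  toLinearEquiv := Shrink.linearEquiv 𝕜 E
  norm_map' _ := rfl

theorem IsPLambdaSpace.exists_extension_of_small (hY : IsPLambdaSpace.{u, v} 𝕜 Y lam)
    (hlam : 0 ≤ lam) {W Z : Type*} [NormedAddCommGroup W] [NormedSpace 𝕜 W] [CompleteSpace W]
    [NormedAddCommGroup Z] [NormedSpace 𝕜 Z] [CompleteSpace Z] [Small.{u} W] [Small.{v} Z]
    (i : W →ₗᵢ[𝕜] Z) (S : W →L[𝕜] Y) :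
    ∃ L : Z →L[𝕜] Y, (∀ w, L (i w) = S w) ∧ ‖L‖ ≤ lam * ‖S‖ := by
  let eW := shrinkLinearIsometryEquiv.{u} 𝕜 W
  let eZ := shrinkLinearIsometryEquiv.{v} 𝕜 Z
  have : CompleteSpace (Shrink.{u} W) :=
    (completeSpace_congr (e := eW.toEquiv) eW.isometry.isUniformEmbedding).2 inferInstance
  have : CompleteSpace (Shrink.{v} Z) :=
    (completeSpace_congr (e := eZ.toEquiv) eZ.isometry.isUniformEmbedding).2 inferInstance
  obtain ⟨L, hL, hL_norm⟩ := hY (Shrink.{u} W) (Shrink.{v} Z)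
    (eZ.symm.toLinearIsometry.comp (i.comp eW.toLinearIsometry))
    (S.comp (eW.toContinuousLinearEquiv : Shrink.{u} W →L[𝕜] W))
  refine ⟨L.comp (eZ.symm.toContinuousLinearEquiv : Z →L[𝕜] Shrink.{v} Z), fun w ↦ ?_, ?_⟩
  · simpa using hL (eW.symm w)
  · have hS : ‖S.comp (eW.toContinuousLinearEquiv : Shrink.{u} W →L[𝕜] W)‖ ≤ ‖S‖ :=
      ContinuousLinearMap.opNorm_le_bound _ (norm_nonneg S) fun w ↦
        (S.le_opNorm (eW w)).trans_eq (by rw [eW.norm_map])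
    refine ContinuousLinearMap.opNorm_le_bound _ (by positivity) fun z ↦ ?_
    calc ‖L (eZ.symm z)‖ ≤ lam * ‖S‖ * ‖eZ.symm z‖ :=
          L.le_of_opNorm_le (hL_norm.trans (mul_le_mul_of_nonneg_left hS hlam)) _
      _ = lam * ‖S‖ * ‖z‖ := by rw [eZ.symm.norm_map]

theorem IsPLambdaSpace.exists_extension_of_norm_le [CompleteSpace Y]
    (hY : IsPLambdaSpace.{u, v} 𝕜 Y lam) (hlam : 0 ≤ lam) {Z : Type*} [NormedAddCommGroup Z]
    [NormedSpace 𝕜 Z] [CompleteSpace Z] [Small.{u} Z] [Small.{v} Z] {W : Submodule 𝕜 Z}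
    {S : W →ₗ[𝕜] Y} (hS : ∀ w, ‖S w‖ ≤ ‖(w : Z)‖) :
    ∃ L : Z →L[𝕜] Y, (∀ w : W, L w = S w) ∧ ‖L‖ ≤ lam := by
  let ι : W →ₗ[𝕜] W.topologicalClosure := Submodule.inclusion W.le_topologicalClosure
  have hι : DenseRange ι := (denseRange_inclusion_iff W.le_topologicalClosure).2 subset_rfl
  have hSι : ∀ w, ‖S w‖ ≤ 1 * ‖ι w‖ := fun w ↦ (hS w).trans_eq (one_mul _).symm
  have : CompleteSpace W.topologicalClosure := W.isClosed_topologicalClosure.completeSpace_coe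
  have : Small.{u} W.topologicalClosure :=
    small_of_injective (f := Subtype.val) Subtype.val_injective
  obtain ⟨L, hL, hL_norm⟩ :=
    hY.exists_extension_of_small hlam W.topologicalClosure.subtypeₗᵢ (S.extendOfNorm ι)
  exact ⟨L, fun w ↦ (hL (ι w)).trans (LinearMap.extendOfNorm_eq hι ⟨1, hSι⟩ w),
    hL_norm.trans (mul_le_of_le_one_right hlam
      (LinearMap.opNorm_extendOfNorm_le hι zero_le_one hSι))⟩

theorem IsPLambdaSpace.extendsContractionsFromC0 [CompleteSpace Y]
    (hY : IsPLambdaSpace.{u, v} 𝕜 Y lam) (hlam : 0 ≤ lam) :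
    ExtendsContractionsFromC0 𝕜 Y lam :=
  have := small_zeroAtInfty.{u} (𝕜 := 𝕜) ℕ
  have := small_zeroAtInfty.{v} (𝕜 := 𝕜) ℕ
  fun _ _ hS ↦ hY.exists_extension_of_norm_le hlam hS

theorem exists_linearMap_range_of_norm_le {X Z : Type*} [AddCommGroup X] [Module 𝕜 X]
    [NormedAddCommGroup Z] [NormedSpace 𝕜 Z] {A : X →ₗ[𝕜] Z} {T : X →ₗ[𝕜] Y}
    (hTA : ∀ x, ‖T x‖ ≤ ‖A x‖) :
    ∃ S : A.range →ₗ[𝕜] Y, (∀ w, ‖S w‖ ≤ ‖(w : Z)‖) ∧ ∀ x, S (A.rangeRestrict x) = T x := by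
  have hS : ∀ x, T.compLeftInverse A (A.rangeRestrict x) = T x := fun x ↦
    T.compLeftInverse_apply_of_bdd A ⟨1, by simpa using hTA⟩ x _ rfl
  refine ⟨T.compLeftInverse A, fun w ↦ ?_, hS⟩
  obtain ⟨x, rfl⟩ := A.surjective_rangeRestrict w
  exact (hS x).symm ▸ hTA x

end Extension

end

theorem terzioglu_representation_general {𝕜 X Y : Type*} [RCLike 𝕜]
    [NormedAddCommGroup X] [NormedSpace 𝕜 X] [NormedAddCommGroup Y] [NormedSpace 𝕜 Y]
    (lam : ℝ) (hY : ExtendsContractionsFromC0 𝕜 Y lam)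
    (T : X →L[𝕜] Y) (hT : IsCompactOperator T) (ε : ℝ) (hε : 0 < ε) :
    ∃ (u : ℕ → X →L[𝕜] 𝕜) (y : ℕ → Y),
      Tendsto (fun n => ‖u n‖) atTop (nhds 0) ∧
      (∀ n, ‖u n‖ ≤ ‖T‖ + ε) ∧
      (∀ v : Y →L[𝕜] 𝕜, ‖v‖ ≤ 1 →
        Summable (fun n => ‖v (y n)‖) ∧ (∑' n, ‖v (y n)‖) ≤ lam) ∧
      (∀ x : X, HasSum (fun n => u n x • y n) (T x)) := by
  obtain ⟨u, hu, hu_norm, hTu⟩ := exists_norm_le_norm_functionalsToC0 hT hε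
  obtain ⟨S, hS, hST⟩ := exists_linearMap_range_of_norm_le (T := T.toLinearMap) hTu
  obtain ⟨L, hLS, hL_norm⟩ := hY _ S hS
  have hL : ∀ x, L (functionalsToC0 u hu x) = T x := fun x ↦ (hLS _).trans (hST x)
  refine ⟨u, fun n ↦ L (c0Single 𝕜 n), ?_, hu_norm, fun v hv ↦ ?_, fun x ↦ ?_⟩
  · simpa [Nat.cofinite_eq_atTop] using hu.norm
  · have hvL : ‖v.comp L‖ ≤ lam := calc
      ‖v.comp L‖ ≤ ‖v‖ * ‖L‖ := v.opNorm_comp_le L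
      _ ≤ ‖L‖ := mul_le_of_le_one_left (norm_nonneg L) hv
      _ ≤ lam := hL_norm
    exact ⟨summable_norm_apply_c0Single (v.comp L),
      (tsum_norm_apply_c0Single_le (v.comp L)).trans hvL⟩
  · simpa only [map_smul, functionalsToC0_apply, hL] using
      L.hasSum (hasSum_smul_c0Single (functionalsToC0 u hu x))

/-- Terzioğlu's representation theorem: a compact operator `T` from a Banach space `X` into a
`𝒫_λ`-space `Y` admits, for every `ε > 0`, a representation `T x = Σₙ uₙ(x) yₙ` with
`‖uₙ‖ → 0`, `supₙ ‖uₙ‖ ≤ ‖T‖ + ε` and `sup_{‖v‖ ≤ 1} Σₙ |v(yₙ)| ≤ λ`. -/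
theorem terzioglu_representation {𝕜 X Y : Type*} [RCLike 𝕜]
    [NormedAddCommGroup X] [NormedSpace 𝕜 X] [CompleteSpace X]
    [NormedAddCommGroup Y] [NormedSpace 𝕜 Y] [CompleteSpace Y]
    (lam : ℝ) (hlam : 1 ≤ lam) (hY : IsPLambdaSpace.{u, v} 𝕜 Y lam)
    (T : X →L[𝕜] Y) (hT : IsCompactOperator T)
    (ε : ℝ) (hε : 0 < ε) :
    ∃ (u : ℕ → X →L[𝕜] 𝕜) (y : ℕ → Y),
      Tendsto (fun n => ‖u n‖) atTop (nhds 0) ∧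
      (∀ n, ‖u n‖ ≤ ‖T‖ + ε) ∧
      (∀ v : Y →L[𝕜] 𝕜, ‖v‖ ≤ 1 →
        Summable (fun n => ‖v (y n)‖) ∧ (∑' n, ‖v (y n)‖) ≤ lam) ∧
      (∀ x : X, HasSum (fun n => u n x • y n) (T x)) :=
  terzioglu_representation_general lam (hY.extendsContractionsFromC0 (zero_le_one.trans hlam))
    T hT ε hε
end
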